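/- Let n >= 1 be an integer, let mu' : Q_p^* -> C^* be an unramified group homomorphism and mu : Q_p^* -> C^* any group homomorphism, and set alpha = mu(p)^{-1} * sqrt(p) and beta = mu'(p)^{-1} / sqrt(p). Let v : G -> C be a function such that: (i) v(b*g) = mu(a) * mu'(d) * |a/d|^{1/2} * v(g) for every b = [[a,b0],[0,d]] in B and g in G; (ii) v(g*k) = mu(d) * mu'(d) * v(g) for every g in G and every k in I_n whose (2,2) entry is d; (iii) v(k) = 0 for every k in I; (iv) v([[1,0],[1,1]]) = 1. Then for every integer r >= 0 and every k in K: if k lies in I_s \ I_{s+1} for some 0 <= s <= r and has lower-left entry c, then v(k*gamma^r) = alpha^s * beta^{r-s} * mu(p^s * det(k) / c); and if k lies in I_{r+1} then v(k*gamma^r) = 0. Moreover, for every r >= 1: v(k*gamma^r) - beta * v(k*gamma^{r-1}) = alpha^r * mu(p^r * det(k) / c) if k lies in I_r \ I_{r+1} with lower-left entry c, and equals 0 for all other k in K. -/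

import Mathlib

open Matrix

noncomputable section

variable (p : ℕ) [Fact p.Prime]

/-- The underlying matrix of an element of `GL₂(ℚ_p)`. -/
def mat (g : GL (Fin 2) ℚ_[p]) : Matrix (Fin 2) (Fin 2) ℚ_[p] := g

/-- Membership in `K = GL₂(ℤ_p)`: all entries are `p`-adic integers and the
determinant is a unit of `ℤ_p`. -/
def inK (g : GL (Fin 2) ℚ_[p]) : Prop :=
  (∀ i j, ‖mat p g i j‖ ≤ 1) ∧ ‖(mat p g).det‖ = 1

/-- Membership in the Iwahori subgroup `I_n` of `K`: for `n = 0`, `I_0 = K`;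
for `n ≥ 1`, the diagonal entries are units of `ℤ_p` and the lower left entry
lies in `p^n ℤ_p`. -/
def inI (n : ℕ) (g : GL (Fin 2) ℚ_[p]) : Prop :=
  inK p g ∧ (n = 0 ∨
    (‖mat p g 0 0‖ = 1 ∧ ‖mat p g 1 1‖ = 1 ∧ ‖mat p g 1 0‖ ≤ (p : ℝ) ^ (-(n : ℤ))))

/-- `p` as a unit of `ℚ_p`. -/
def pu : ℚ_[p]ˣ :=
  Units.mk0 (p : ℚ_[p]) (by exact_mod_cast (Fact.out : p.Prime).ne_zero)

/-- The element `γ = diag(p⁻¹, 1)` of `GL₂(ℚ_p)`. -/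
def gamma : GL (Fin 2) ℚ_[p] :=
  Matrix.GeneralLinearGroup.mkOfDetNeZero !![(p : ℚ_[p])⁻¹, 0; 0, 1] (by
    have hp : (p : ℚ_[p]) ≠ 0 := by exact_mod_cast (Fact.out : p.Prime).ne_zero
    simp [Matrix.det_fin_two_of, hp])

/-- A character of `ℚ_p^×` is unramified if it is trivial on `ℤ_p^×`. -/
def Unramified (μ : ℚ_[p]ˣ →* ℂˣ) : Prop :=
  ∀ u : ℚ_[p]ˣ, ‖(u : ℚ_[p])‖ = 1 → μ u = 1

/-- The element `[[1,0],[1,1]]` of `GL₂(ℚ_p)`. -/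
def lowerOne : GL (Fin 2) ℚ_[p] :=
  Matrix.GeneralLinearGroup.mkOfDetNeZero !![(1 : ℚ_[p]), 0; 1, 1] (by
    simp [Matrix.det_fin_two_of])

/-!
A function that is equivariant under `B` and right invariant under `N(ℤ_p)` is determined on the
elements with lower row `(c, d)`, `|d| ≤ |c|`, by its value at `[[1, 0], [1, 1]]`, because these
elements form a single double coset `B · [[1, 0], [1, 1]] · N(ℤ_p)`. For `k ∈ I_s \ I_{s+1}` and
`s ≤ r`, the lower row `(p^{-r} c, d)` of `k γ^r` is of this kind, and reading off the torus part
gives `α^s β^{r-s} μ(p^s det k / c)`. For `k ∈ I_{r+1}`, instead, `γ^{-r} k γ^r` lies in `I`, where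
the function vanishes.
-/

theorem norm_diag_eq_one_of_norm_lower_lt_one {F : Type*} [NormedField F] [IsUltrametricDist F]
    {A : Matrix (Fin 2) (Fin 2) F} (hA : ∀ i j, ‖A i j‖ ≤ 1) (hdet : ‖A.det‖ = 1)
    (hlower : ‖A 1 0‖ < 1) : ‖A 0 0‖ = 1 ∧ ‖A 1 1‖ = 1 := by
  have hoff : ‖A 0 1 * A 1 0‖ < 1 := by
    rw [norm_mul]
    exact mul_lt_one_of_nonneg_of_lt_one_right (hA 0 1) (norm_nonneg _) hlower
  have hdiag : 1 ≤ ‖A 0 0‖ * ‖A 1 1‖ := by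
    have hmax := IsUltrametricDist.norm_add_le_max (A 0 0 * A 1 1) (-(A 0 1 * A 1 0))
    rw [← sub_eq_add_neg, ← det_fin_two, hdet, le_max_iff, norm_neg, norm_mul (A 0 0)] at hmax
    exact hmax.resolve_right hoff.not_ge
  exact ⟨(hA 0 0).antisymm (hdiag.trans (mul_le_of_le_one_right (norm_nonneg _) (hA 1 1))),
    (hA 1 1).antisymm (hdiag.trans (mul_le_of_le_one_left (norm_nonneg _) (hA 0 0)))⟩

section

open Matrix.GeneralLinearGroup

variable {p}

theorem mat_mul (g h : GL (Fin 2) ℚ_[p]) : mat p (g * h) = mat p g * mat p h := rfl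

theorem mat_lowerOne : mat p (lowerOne p) = !![1, 0; 1, 1] := rfl

theorem mat_upperRightHom (x : ℚ_[p]) : mat p (upperRightHom x) = !![1, x; 0, 1] := rfl

theorem mat_gamma_pow (r : ℕ) : mat p (gamma p ^ r) = !![((p : ℚ_[p]) ^ r)⁻¹, 0; 0, 1] := by
  induction r with
  | zero => simp [mat, one_fin_two]
  | succ r ih =>
    have hgamma : mat p (gamma p) = !![(p : ℚ_[p])⁻¹, 0; 0, 1] := rfl
    rw [pow_succ, mat_mul, ih, hgamma]
    simp [pow_succ, mul_comm]

theorem mat_mul_gamma_pow (g : GL (Fin 2) ℚ_[p]) (r : ℕ) :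
    mat p (g * gamma p ^ r) =
      !![mat p g 0 0 / p ^ r, mat p g 0 1; mat p g 1 0 / p ^ r, mat p g 1 1] := by
  rw [mat_mul, mat_gamma_pow]
  ext i j
  fin_cases i <;> fin_cases j <;> simp [mul_apply, div_eq_mul_inv]

theorem det_gamma : det (gamma p) = (pu p)⁻¹ := by
  ext
  simp [gamma, pu, mkOfDetNeZero]

theorem norm_pu_pow (m : ℕ) : ‖((pu p ^ m : ℚ_[p]ˣ) : ℚ_[p])‖ = ((p : ℝ) ^ m)⁻¹ := by
  simp [pu]

/-- The element `[[a, x], [0, d]]` of the Borel subgroup `B`, the left factor in the decomposition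
of the big cell. -/
def borelMatrix (a d : ℚ_[p]ˣ) (x : ℚ_[p]) : GL (Fin 2) ℚ_[p] :=
  mkOfDetNeZero !![(a : ℚ_[p]), x; 0, (d : ℚ_[p])] (by simp [det_fin_two_of])

theorem mat_borelMatrix (a d : ℚ_[p]ˣ) (x : ℚ_[p]) :
    mat p (borelMatrix a d x) = !![(a : ℚ_[p]), x; 0, (d : ℚ_[p])] := rfl

theorem eq_borelMatrix_mul_lowerOne_mul_upperRightHom {g : GL (Fin 2) ℚ_[p]} {c : ℚ_[p]ˣ}
    (hc : mat p g 1 0 = c) :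
    g = borelMatrix (det g / c) c (mat p g 0 0 - (det g / c : ℚ_[p]ˣ)) * lowerOne p *
      upperRightHom (mat p g 1 1 / c - 1) := by
  have hdet : (det g : ℚ_[p]) = mat p g 0 0 * mat p g 1 1 - mat p g 0 1 * c := by
    rw [← hc]
    exact det_fin_two _
  refine Units.ext (?_ : mat p g = mat p _)
  rw [mat_mul, mat_mul, mat_borelMatrix, mat_lowerOne, mat_upperRightHom]
  ext i j
  fin_cases i <;> fin_cases j
  · simp
  · suffices mat p g 0 1 =
        mat p g 0 0 * (mat p g 1 1 / c - 1) + (mat p g 0 0 - (det g : ℚ_[p]) / c) by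
      simpa using this
    rw [hdet]
    field_simp
    ring
  · simp [hc]
  · simp [mul_sub, mul_div_cancel₀]

section Iwahori

variable {k : GL (Fin 2) ℚ_[p]} {r s : ℕ}

theorem inI_iff_norm_le (hk : inK p k) : inI p s k ↔ ‖mat p k 1 0‖ ≤ (p : ℝ) ^ (-(s : ℤ)) := by
  have hp : (1 : ℝ) < p := mod_cast (Fact.out : p.Prime).one_lt
  constructor
  · rintro ⟨-, rfl | ⟨-, -, hc⟩⟩
    · simpa using hk.1 1 0
    · exact hc
  · refine fun hc ↦ ⟨hk, s.eq_zero_or_pos.imp_right fun hs ↦ ?_⟩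
    have hc_lt : ‖mat p k 1 0‖ < 1 := hc.trans_lt (zpow_lt_one_of_neg₀ hp (by omega))
    obtain ⟨ha, hd⟩ := norm_diag_eq_one_of_norm_lower_lt_one hk.1 hk.2 hc_lt
    exact ⟨ha, hd, hc⟩

theorem inI_antitone : Antitone (inI p) := fun r s hrs k hk ↦ by
  have hp : (1 : ℝ) ≤ p := mod_cast (Fact.out : p.Prime).one_lt.le
  rw [inI_iff_norm_le hk.1]
  exact ((inI_iff_norm_le hk.1).1 hk).trans (zpow_le_zpow_right₀ hp (by omega))

theorem norm_lower_eq_of_inI_of_not_inI (hs : inI p s k) (hs' : ¬ inI p (s + 1) k) :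
    ‖mat p k 1 0‖ = (p : ℝ) ^ (-(s : ℤ)) := by
  have hexp : -((s + 1 : ℕ) : ℤ) + 1 = -(s : ℤ) := by omega
  rw [inI_iff_norm_le hs.1, Padic.norm_le_pow_iff_norm_lt_pow_add_one, hexp, not_lt] at hs'
  exact ((inI_iff_norm_le hs.1).1 hs).antisymm hs'

theorem lower_ne_zero_of_not_inI (hk : inK p k) (hs : ¬ inI p s k) : mat p k 1 0 ≠ 0 := by
  intro hc
  rw [inI_iff_norm_le hk, hc, norm_zero] at hs
  exact hs (by positivity)

theorem exists_inI_and_not_inI_succ (hk : inK p k) (hr : ¬ inI p (r + 1) k) :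
    ∃ s ≤ r, inI p s k ∧ ¬ inI p (s + 1) k := by
  obtain ⟨s, hs, hs'⟩ := Nat.exists_not_and_succ_of_not_zero_of_exists
    (p := fun s ↦ ¬ inI p s k) (not_not.2 ⟨hk, .inl rfl⟩) ⟨r + 1, hr⟩
  rw [not_not] at hs
  exact ⟨s, not_lt.1 fun hrs ↦ hr (inI_antitone hrs k hs), hs, hs'⟩

theorem inI_upperRightHom (n : ℕ) {x : ℚ_[p]} (hx : ‖x‖ ≤ 1) : inI p n (upperRightHom x) := by
  have hK : inK p (upperRightHom x) := by
    rw [inK, mat_upperRightHom]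
    refine ⟨fun i j ↦ ?_, by simp⟩
    fin_cases i <;> fin_cases j <;> simp [hx]
  rw [inI_iff_norm_le hK, mat_upperRightHom]
  simp

theorem mat_conj_gamma_pow (r : ℕ) (k : GL (Fin 2) ℚ_[p]) :
    mat p ((gamma p ^ r)⁻¹ * k * gamma p ^ r) =
      !![mat p k 0 0, p ^ r * mat p k 0 1; mat p k 1 0 / p ^ r, mat p k 1 1] := by
  have hp : (p : ℚ_[p]) ≠ 0 := (pu p).ne_zero
  have hinv : mat p (gamma p ^ r)⁻¹ = !![(p : ℚ_[p]) ^ r, 0; 0, 1] := by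
    refine (coe_inv (gamma p ^ r)).trans (inv_eq_right_inv ?_)
    change mat p (gamma p ^ r) * _ = 1
    simp [mat_gamma_pow, hp, one_fin_two]
  rw [mul_assoc, mat_mul, hinv, mat_mul_gamma_pow]
  simp [hp, mul_div_cancel₀]

theorem inI_conj_gamma_pow (hk : inI p (s + r) k) :
    inI p s ((gamma p ^ r)⁻¹ * k * gamma p ^ r) := by
  have hp : (1 : ℝ) < p := mod_cast (Fact.out : p.Prime).one_lt
  have hlower : ‖mat p k 1 0 / (p : ℚ_[p]) ^ r‖ ≤ (p : ℝ) ^ (-(s : ℤ)) := by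
    rw [norm_div, Padic.norm_p_pow, div_le_iff₀ (by positivity), ← zpow_add₀ (by positivity)]
    have hexp : -(s : ℤ) + -(r : ℤ) = -((s + r : ℕ) : ℤ) := by omega
    rw [hexp]
    exact (inI_iff_norm_le hk.1).1 hk
  have hupper : ‖(p : ℚ_[p]) ^ r * mat p k 0 1‖ ≤ 1 := by
    rw [norm_mul, norm_pow]
    exact mul_le_one₀ (pow_le_one₀ (norm_nonneg _) Padic.norm_p_lt_one.le) (norm_nonneg _)
      (hk.1.1 0 1)
  have hK : inK p ((gamma p ^ r)⁻¹ * k * gamma p ^ r) := by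
    refine ⟨fun i j ↦ ?_, ?_⟩
    · rw [mat_conj_gamma_pow]
      fin_cases i <;> fin_cases j
      · exact hk.1.1 0 0
      · exact hupper
      · exact hlower.trans (zpow_le_one_of_nonpos₀ hp.le (by omega))
      · exact hk.1.1 1 1
    · have hdet : det ((gamma p ^ r)⁻¹ * k * gamma p ^ r) = det k := by
        simp [mul_comm]
      exact (congrArg (fun x : ℚ_[p]ˣ ↦ ‖(x : ℚ_[p])‖) hdet).trans hk.1.2
  rw [inI_iff_norm_le hK, mat_conj_gamma_pow]
  exact hlower

end Iwahori

theorem Unramified.map_eq_of_norm_eq {μ' : ℚ_[p]ˣ →* ℂˣ} (hμ' : Unramified p μ') {x y : ℚ_[p]ˣ}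
    (h : ‖(x : ℚ_[p])‖ = ‖(y : ℚ_[p])‖) : μ' x = μ' y := by
  rw [← div_eq_one, ← map_div]
  refine hμ' _ ?_
  rw [Units.val_div_eq_div_val, norm_div, h, div_self (norm_ne_zero_iff.2 y.ne_zero)]

variable (p) in
/-- Equivariance under left translation by the Borel subgroup `B`: the condition that defines the
normalized induction `Ind_B^G (μ ⊗ μ')`, without any smoothness requirement. -/
def IsBorelEquivariant (μ μ' : ℚ_[p]ˣ →* ℂˣ) (v : GL (Fin 2) ℚ_[p] → ℂ) : Prop :=
  ∀ (b g : GL (Fin 2) ℚ_[p]) (a d : ℚ_[p]ˣ),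
    mat p b 1 0 = 0 → mat p b 0 0 = a → mat p b 1 1 = d →
    v (b * g) = (μ a : ℂ) * (μ' d : ℂ) * (Real.sqrt ‖(a : ℚ_[p]) / (d : ℚ_[p])‖ : ℂ) * v g

variable (p) in
/-- Invariance under right translation by the subgroup `N(ℤ_p)` of upper unipotent matrices with
entries in `ℤ_p`. -/
def IsUnipotentInvariant (v : GL (Fin 2) ℚ_[p] → ℂ) : Prop :=
  ∀ (g : GL (Fin 2) ℚ_[p]) (x : ℚ_[p]), ‖x‖ ≤ 1 → v (g * upperRightHom x) = v g

namespace IsBorelEquivariant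

variable {μ μ' : ℚ_[p]ˣ →* ℂˣ} {v : GL (Fin 2) ℚ_[p] → ℂ} {g k : GL (Fin 2) ℚ_[p]} {r s : ℕ}

theorem apply_eq_of_norm_le (hvB : IsBorelEquivariant p μ μ' v) (hvN : IsUnipotentInvariant p v)
    (hv1 : v (lowerOne p) = 1) {c : ℚ_[p]ˣ} (hc : mat p g 1 0 = c)
    (hd : ‖mat p g 1 1‖ ≤ ‖(c : ℚ_[p])‖) :
    v g = (μ (det g / c) : ℂ) * (μ' c : ℂ) *
      (Real.sqrt ‖((det g / c : ℚ_[p]ˣ) : ℚ_[p]) / c‖ : ℂ) := by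
  have hx : ‖mat p g 1 1 / c - 1‖ ≤ 1 := by
    have hquot : ‖mat p g 1 1 / c‖ ≤ 1 := by
      rw [norm_div]
      exact div_le_one_of_le₀ hd (norm_nonneg _)
    rw [sub_eq_add_neg]
    refine (IsUltrametricDist.norm_add_le_max _ _).trans (max_le hquot ?_)
    rw [norm_neg, norm_one]
  conv_lhs => rw [eq_borelMatrix_mul_lowerOne_mul_upperRightHom hc]
  rw [hvN _ _ hx, hvB _ _ (det g / c) c rfl rfl rfl, hv1, mul_one]

theorem apply_eq_of_norm_eq (hvB : IsBorelEquivariant p μ μ' v) (hvN : IsUnipotentInvariant p v)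
    (hv1 : v (lowerOne p) = 1) (hμ' : Unramified p μ') {c : ℚ_[p]ˣ} (hc : mat p g 1 0 = c)
    (hd : ‖mat p g 1 1‖ ≤ ‖(c : ℚ_[p])‖) {t : ℕ} (ht : ‖(c : ℚ_[p])‖ = (p : ℝ) ^ t)
    (hs : ‖((det g / c : ℚ_[p]ˣ) : ℚ_[p])‖ = (p : ℝ) ^ s) :
    v g = (μ (det g / c) : ℂ) * (Real.sqrt p : ℂ) ^ s *
      (((μ' (pu p) : ℂ))⁻¹ / (Real.sqrt p : ℂ)) ^ t := by
  have hunram : μ' c = (μ' (pu p))⁻¹ ^ t := by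
    rw [← map_inv, ← map_pow]
    refine hμ'.map_eq_of_norm_eq ?_
    rw [ht, inv_pow, Units.val_inv_eq_inv_val, norm_inv, norm_pu_pow, inv_inv]
  have hsqrt (m : ℕ) : Real.sqrt ((p : ℝ) ^ m) = Real.sqrt p ^ m := by
    rw [Real.sqrt_eq_iff_mul_self_eq (by positivity) (by positivity), ← mul_pow,
      Real.mul_self_sqrt p.cast_nonneg]
  rw [hvB.apply_eq_of_norm_le hvN hv1 hc hd, hunram, norm_div, hs, ht,
    Real.sqrt_div (by positivity), hsqrt, hsqrt]
  push_cast
  ring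

theorem apply_mul_gamma_pow_eq_zero (hvB : IsBorelEquivariant p μ μ' v)
    (hvsupp : ∀ k : GL (Fin 2) ℚ_[p], inI p 1 k → v k = 0) (hk : inI p (r + 1) k) :
    v (k * gamma p ^ r) = 0 := by
  have hconj : k * gamma p ^ r = gamma p ^ r * ((gamma p ^ r)⁻¹ * k * gamma p ^ r) := by group
  rw [hconj, hvB _ _ (pu p ^ r)⁻¹ 1 (by simp [mat_gamma_pow]) (by simp [mat_gamma_pow, pu])
    (by simp [mat_gamma_pow]), hvsupp _ (inI_conj_gamma_pow (add_comm r 1 ▸ hk)), mul_zero]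

theorem apply_mul_gamma_pow (hvB : IsBorelEquivariant p μ μ' v) (hvN : IsUnipotentInvariant p v)
    (hv1 : v (lowerOne p) = 1) (hμ' : Unramified p μ') {α β : ℂ}
    (hα : α = ((μ (pu p) : ℂ))⁻¹ * (Real.sqrt p : ℂ))
    (hβ : β = ((μ' (pu p) : ℂ))⁻¹ / (Real.sqrt p : ℂ))
    (hsr : s ≤ r) (hs : inI p s k) (hs' : ¬ inI p (s + 1) k) {u : ℚ_[p]ˣ}
    (hu : (u : ℚ_[p]) = (p : ℚ_[p]) ^ s * (mat p k).det / mat p k 1 0) :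
    v (k * gamma p ^ r) = α ^ s * β ^ (r - s) * (μ u : ℂ) := by
  obtain ⟨t, rfl⟩ := Nat.exists_eq_add_of_le hsr
  have hp : (1 : ℝ) < p := mod_cast (Fact.out : p.Prime).one_lt
  have hc_norm := norm_lower_eq_of_inI_of_not_inI hs hs'
  obtain ⟨c, hc⟩ : IsUnit (mat p k 1 0) := (lower_ne_zero_of_not_inI hs.1 hs').isUnit
  rw [← hc] at hc_norm hu
  have hlower : mat p (k * gamma p ^ (s + t)) 1 0 = (c / pu p ^ (s + t) : ℚ_[p]ˣ) := by
    simp [mat_mul_gamma_pow, hc, pu]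
  have hlower_norm : ‖((c / pu p ^ (s + t) : ℚ_[p]ˣ) : ℚ_[p])‖ = (p : ℝ) ^ t := by
    rw [Units.val_div_eq_div_val, norm_div, hc_norm, norm_pu_pow, _root_.zpow_neg, zpow_natCast]
    field_simp
    exact pow_add _ _ _
  have hright : ‖mat p (k * gamma p ^ (s + t)) 1 1‖ ≤ (p : ℝ) ^ t := by
    rw [mat_mul_gamma_pow]
    exact (hs.1.1 1 1).trans (one_le_pow₀ hp.le)
  have htorus : det (k * gamma p ^ (s + t)) / (c / pu p ^ (s + t)) = u / pu p ^ s := by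
    have hu' : u = pu p ^ s * det k / c := Units.ext (by simpa [pu, mat] using hu)
    rw [hu', map_mul, map_pow, det_gamma, inv_pow, div_div_eq_mul_div, inv_mul_cancel_right,
      div_right_comm, mul_div_cancel_left]
  have hu_norm : ‖(u : ℚ_[p])‖ = 1 := by
    rw [hu, norm_div, norm_mul, hs.1.2, hc_norm, Padic.norm_p_pow, mul_one]
    exact div_self (by positivity)
  have htorus_norm : ‖((u / pu p ^ s : ℚ_[p]ˣ) : ℚ_[p])‖ = (p : ℝ) ^ s := by
    rw [Units.val_div_eq_div_val, norm_div, hu_norm, norm_pu_pow, one_div, inv_inv]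
  rw [hvB.apply_eq_of_norm_eq hvN hv1 hμ' hlower (hlower_norm ▸ hright) hlower_norm
    (htorus ▸ htorus_norm), htorus, ← hβ, hα, Nat.add_sub_cancel_left, map_div, map_pow]
  push_cast
  ring

theorem apply_mul_gamma_pow_succ (hvB : IsBorelEquivariant p μ μ' v)
    (hvN : IsUnipotentInvariant p v) (hv1 : v (lowerOne p) = 1) (hμ' : Unramified p μ') {β : ℂ}
    (hβ : β = ((μ' (pu p) : ℂ))⁻¹ / (Real.sqrt p : ℂ)) (hk : inK p k)
    (hr : ¬ inI p (r + 1) k) :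
    v (k * gamma p ^ (r + 1)) = β * v (k * gamma p ^ r) := by
  obtain ⟨s, hsr, hs, hs'⟩ := exists_inI_and_not_inI_succ hk hr
  obtain ⟨u, hu⟩ : IsUnit ((p : ℚ_[p]) ^ s * (mat p k).det / mat p k 1 0) :=
    (div_ne_zero (mul_ne_zero (pow_ne_zero s (pu p).ne_zero) (det_ne_zero k))
      (lower_ne_zero_of_not_inI hk hr)).isUnit
  rw [hvB.apply_mul_gamma_pow hvN hv1 hμ' rfl hβ (hsr.trans r.le_succ) hs hs' hu,
    hvB.apply_mul_gamma_pow hvN hv1 hμ' rfl hβ hsr hs hs' hu, Nat.succ_sub hsr, pow_succ]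
  ring

end IsBorelEquivariant

end

theorem stmt3_general (μ μ' : ℚ_[p]ˣ →* ℂˣ) (hμ' : Unramified p μ')
    (α β : ℂ)
    (hα : α = ((μ (pu p) : ℂ))⁻¹ * (Real.sqrt p : ℂ))
    (hβ : β = ((μ' (pu p) : ℂ))⁻¹ / (Real.sqrt p : ℂ))
    (v : GL (Fin 2) ℚ_[p] → ℂ) (hvB : IsBorelEquivariant p μ μ' v)
    (hvN : IsUnipotentInvariant p v)
    (hvsupp : ∀ k : GL (Fin 2) ℚ_[p], inI p 1 k → v k = 0)
    (hv1 : v (lowerOne p) = 1) :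
    ∀ (r : ℕ) (k : GL (Fin 2) ℚ_[p]),
      ((∀ (s : ℕ) (u : ℚ_[p]ˣ), s ≤ r → inI p s k → ¬ inI p (s + 1) k →
          (u : ℚ_[p]) = (p : ℚ_[p]) ^ s * (mat p k).det / mat p k 1 0 →
          v (k * gamma p ^ r) = α ^ s * β ^ (r - s) * (μ u : ℂ)) ∧
        (inI p (r + 1) k → v (k * gamma p ^ r) = 0)) ∧
      (1 ≤ r →
        (∀ u : ℚ_[p]ˣ, inI p r k → ¬ inI p (r + 1) k →
          (u : ℚ_[p]) = (p : ℚ_[p]) ^ r * (mat p k).det / mat p k 1 0 →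
          v (k * gamma p ^ r) - β * v (k * gamma p ^ (r - 1)) =
            α ^ r * (μ u : ℂ)) ∧
        (inK p k → ¬ (inI p r k ∧ ¬ inI p (r + 1) k) →
          v (k * gamma p ^ r) - β * v (k * gamma p ^ (r - 1)) = 0)) := by
  have hvalue {r s : ℕ} {k : GL (Fin 2) ℚ_[p]} {u : ℚ_[p]ˣ} :=
    hvB.apply_mul_gamma_pow (r := r) (s := s) (k := k) (u := u) hvN hv1 hμ' hα hβ
  have hzero {r : ℕ} {k : GL (Fin 2) ℚ_[p]} :=
    hvB.apply_mul_gamma_pow_eq_zero (r := r) (k := k) hvsupp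
  refine fun r k ↦ ⟨⟨fun s u ↦ hvalue, hzero⟩, fun hr ↦ ?_⟩
  obtain ⟨m, rfl⟩ := Nat.exists_eq_add_of_le' hr
  rw [Nat.add_sub_cancel]
  refine ⟨fun u hk hk' hu ↦ ?_, fun hK hk ↦ ?_⟩
  · simp [hvalue le_rfl hk hk' hu, hzero hk]
  · by_cases hm : inI p (m + 1) k
    · have hm' : inI p (m + 1 + 1) k := not_not.1 (not_and.1 hk hm)
      simp [hzero hm, hzero hm']
    · rw [hvB.apply_mul_gamma_pow_succ hvN hv1 hμ' hβ hK hm, sub_self]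

/-- Lemma «calcul-SP2»: values of the translates `γ^r · v` of the new vector
`v` of the ramified principal series `Ind_B^G (μ ⊗ μ')` with `μ'` unramified
and conductor `n = cond(μ) ≥ 1`. -/
theorem stmt3 (n : ℕ) (hn : 1 ≤ n)
    (μ μ' : ℚ_[p]ˣ →* ℂˣ) (hμ' : Unramified p μ')
    (α β : ℂ)
    (hα : α = ((μ (pu p) : ℂ))⁻¹ * (Real.sqrt p : ℂ))
    (hβ : β = ((μ' (pu p) : ℂ))⁻¹ / (Real.sqrt p : ℂ))
    (v : GL (Fin 2) ℚ_[p] → ℂ)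
    (hvB : ∀ (b g : GL (Fin 2) ℚ_[p]) (a d : ℚ_[p]ˣ),
      mat p b 1 0 = 0 → mat p b 0 0 = a → mat p b 1 1 = d →
      v (b * g) = (μ a : ℂ) * (μ' d : ℂ) *
        (Real.sqrt ‖(a : ℚ_[p]) / (d : ℚ_[p])‖ : ℂ) * v g)
    (hvI : ∀ (g k : GL (Fin 2) ℚ_[p]) (d : ℚ_[p]ˣ),
      inI p n k → mat p k 1 1 = d →
      v (g * k) = (μ d : ℂ) * (μ' d : ℂ) * v g)
    (hvsupp : ∀ k : GL (Fin 2) ℚ_[p], inI p 1 k → v k = 0)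
    (hv1 : v (lowerOne p) = 1) :
    ∀ (r : ℕ) (k : GL (Fin 2) ℚ_[p]),
      -- values of `γ^r · v`
      ((∀ (s : ℕ) (u : ℚ_[p]ˣ), s ≤ r → inI p s k → ¬ inI p (s + 1) k →
          (u : ℚ_[p]) = (p : ℚ_[p]) ^ s * (mat p k).det / mat p k 1 0 →
          v (k * gamma p ^ r) = α ^ s * β ^ (r - s) * (μ u : ℂ)) ∧
        (inI p (r + 1) k → v (k * gamma p ^ r) = 0)) ∧
      -- values of `γ^r · v - β γ^{r-1} · v`, for `r ≥ 1`
      (1 ≤ r →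
        (∀ u : ℚ_[p]ˣ, inI p r k → ¬ inI p (r + 1) k →
          (u : ℚ_[p]) = (p : ℚ_[p]) ^ r * (mat p k).det / mat p k 1 0 →
          v (k * gamma p ^ r) - β * v (k * gamma p ^ (r - 1)) =
            α ^ r * (μ u : ℂ)) ∧
        (inK p k → ¬ (inI p r k ∧ ¬ inI p (r + 1) k) →
          v (k * gamma p ^ r) - β * v (k * gamma p ^ (r - 1)) = 0)) :=
  stmt3_general p μ μ' hμ' α β hα hβ v hvB
    (fun g x hx ↦ by simpa using hvI g _ 1 (inI_upperRightHom n hx) rfl) hvsupp hv1
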